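/- Let u solve the Goursat problem and u⁰ solve the basic problem, and set z = u − u⁰. Then for all i ∈ {1,…,N₁} and j ∈ {1,…,N₂}: ‖z‖_{i,j} ≤ ‖z‖_{i,j−1}·(1 + h₁h₂R′_{i,j}) + h₂R_{i,j}·h₁·Σ_{s=1}^{i−1} [(2N_{s,j} + L_{s,j})‖z‖_{s,j} + h(N_{s,j} + L_{s,j})A] + h₁h₂R_{i,j}(L_{i,j} + N_{i,j})‖z‖_{i−1,j} + h₁h₂·h·R_{i,j}(N_{i,j} + L_{i,j})A, where ‖z‖_{0,j} = ‖z‖_{i,0} = 0. -/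

import Mathlib

open Set

noncomputable section

/-- The closed domain `D̄ = [0,X] × [0,Y]`. -/
def clD (X Y : ℝ) : Set (ℝ × ℝ) := Icc 0 X ×ˢ Icc 0 Y

/-- The open domain `D = (0,X) × (0,Y)`. -/
def opD (X Y : ℝ) : Set (ℝ × ℝ) := Ioo 0 X ×ˢ Ioo 0 Y

/-- Partial derivative in the first variable. -/
def pdx (u : ℝ × ℝ → ℝ) (p : ℝ × ℝ) : ℝ := deriv (fun t => u (t, p.2)) p.1

/-- Partial derivative in the second variable. -/
def pdy (u : ℝ × ℝ → ℝ) (p : ℝ × ℝ) : ℝ := deriv (fun t => u (p.1, t)) p.2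

/-- Mixed partial derivative `∂²u/∂x∂y` (derivative in `y` of the derivative in `x`). -/
def pdxy (u : ℝ × ℝ → ℝ) (p : ℝ × ℝ) : ℝ := pdy (pdx u) p

/-- The open mesh cell `P_{i,j} = (x_{i-1}, x_i) × (y_{j-1}, y_j)`, where
`x_i = i·(X/N₁)`, `y_j = j·(Y/N₂)`. -/
def cellOp (X Y : ℝ) (N₁ N₂ : ℕ) (i j : ℕ) : Set (ℝ × ℝ) :=
  Ioo (((i : ℝ) - 1) * (X / N₁)) ((i : ℝ) * (X / N₁)) ×ˢ
    Ioo (((j : ℝ) - 1) * (Y / N₂)) ((j : ℝ) * (Y / N₂))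

/-- The closed mesh cell `P̄_{i,j} = [x_{i-1}, x_i] × [y_{j-1}, y_j]`. -/
def cellCl (X Y : ℝ) (N₁ N₂ : ℕ) (i j : ℕ) : Set (ℝ × ℝ) :=
  Icc (((i : ℝ) - 1) * (X / N₁)) ((i : ℝ) * (X / N₁)) ×ˢ
    Icc (((j : ℝ) - 1) * (Y / N₂)) ((j : ℝ) * (Y / N₂))

/-- The lower-left corner `(x_{i-1}, y_{j-1})` of the cell `P_{i,j}`. -/
def meshNode (X Y : ℝ) (N₁ N₂ : ℕ) (i j : ℕ) : ℝ × ℝ :=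
  (((i : ℝ) - 1) * (X / N₁), ((j : ℝ) - 1) * (Y / N₂))

/-- `h = √(h₁² + h₂²)`, with `h₁ = X/N₁`, `h₂ = Y/N₂`. -/
def meshH (X Y : ℝ) (N₁ N₂ : ℕ) : ℝ := Real.sqrt ((X / N₁) ^ 2 + (Y / N₂) ^ 2)

/-- The confluent hypergeometric function
`₀F₁(b; w) = Σ_{n=0}^∞ wⁿ / ((b)ₙ · n!)`, where `(b)ₙ = b(b+1)⋯(b+n−1)`. -/
def hyp0F1 (b w : ℝ) : ℝ :=
  ∑' n : ℕ, w ^ n / ((∏ m ∈ Finset.range n, (b + (m : ℝ))) * (n.factorial : ℝ))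

/-- `u` solves the Goursat problem `∂²u/∂x∂y + N(u)·u = f` on `D`,
`u(x,0) = ψ(x)`, `u(0,y) = φ(y)`, with the regularity stated in the paper. -/
structure GoursatSol (X Y : ℝ) (N : ℝ → ℝ) (f : ℝ × ℝ → ℝ) (ψ φ : ℝ → ℝ)
    (u : ℝ × ℝ → ℝ) : Prop where
  cont : ContinuousOn u (clD X Y)
  diffx : ∀ p ∈ opD X Y, DifferentiableAt ℝ (fun t => u (t, p.2)) p.1
  diffy : ∀ p ∈ opD X Y, DifferentiableAt ℝ (fun t => u (p.1, t)) p.2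
  diffxy : ∀ p ∈ opD X Y, DifferentiableAt ℝ (fun t => pdx u (p.1, t)) p.2
  contx : ContinuousOn (pdx u) (opD X Y)
  conty : ContinuousOn (pdy u) (opD X Y)
  contxy : ContinuousOn (pdxy u) (opD X Y)
  eqn : ∀ p ∈ opD X Y, pdxy u p + N (u p) * u p = f p
  bc1 : ∀ x ∈ Icc (0 : ℝ) X, u (x, 0) = ψ x
  bc2 : ∀ y ∈ Icc (0 : ℝ) Y, u (0, y) = φ y

/-- `u0` solves the basic problem: the Goursat problem with the nonlinear coefficient
frozen, on each open mesh cell `P_{i,j}`, at the value of the unknown at the lower-left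
corner of that cell. -/
structure BasicSol (X Y : ℝ) (N : ℝ → ℝ) (f : ℝ × ℝ → ℝ) (ψ φ : ℝ → ℝ)
    (N₁ N₂ : ℕ) (u0 : ℝ × ℝ → ℝ) : Prop where
  cont : ContinuousOn u0 (clD X Y)
  diffx : ∀ i ∈ Finset.Icc 1 N₁, ∀ j ∈ Finset.Icc 1 N₂, ∀ p ∈ cellOp X Y N₁ N₂ i j,
      DifferentiableAt ℝ (fun t => u0 (t, p.2)) p.1
  diffy : ∀ i ∈ Finset.Icc 1 N₁, ∀ j ∈ Finset.Icc 1 N₂, ∀ p ∈ cellOp X Y N₁ N₂ i j,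
      DifferentiableAt ℝ (fun t => u0 (p.1, t)) p.2
  diffxy : ∀ i ∈ Finset.Icc 1 N₁, ∀ j ∈ Finset.Icc 1 N₂, ∀ p ∈ cellOp X Y N₁ N₂ i j,
      DifferentiableAt ℝ (fun t => pdx u0 (p.1, t)) p.2
  contx : ∀ i ∈ Finset.Icc 1 N₁, ∀ j ∈ Finset.Icc 1 N₂,
      ContinuousOn (pdx u0) (cellOp X Y N₁ N₂ i j)
  conty : ∀ i ∈ Finset.Icc 1 N₁, ∀ j ∈ Finset.Icc 1 N₂,
      ContinuousOn (pdy u0) (cellOp X Y N₁ N₂ i j)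
  contxy : ∀ i ∈ Finset.Icc 1 N₁, ∀ j ∈ Finset.Icc 1 N₂,
      ContinuousOn (pdxy u0) (cellOp X Y N₁ N₂ i j)
  eqn : ∀ i ∈ Finset.Icc 1 N₁, ∀ j ∈ Finset.Icc 1 N₂, ∀ p ∈ cellOp X Y N₁ N₂ i j,
      pdxy u0 p + N (u0 (meshNode X Y N₁ N₂ i j)) * u0 p = f p
  bc1 : ∀ x ∈ Icc (0 : ℝ) X, u0 (x, 0) = ψ x
  bc2 : ∀ y ∈ Icc (0 : ℝ) Y, u0 (0, y) = φ y

/-- `‖z‖_{i,j} = sup_{P̄_{i,j}} |z|`, with the convention `‖z‖_{0,j} = ‖z‖_{i,0} = 0`. -/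
def znorm (X Y : ℝ) (N₁ N₂ : ℕ) (z : ℝ × ℝ → ℝ) (i j : ℕ) : ℝ :=
  if i = 0 ∨ j = 0 then 0 else ⨆ p ∈ cellCl X Y N₁ N₂ i j, |z p|

/-- `N_{i,j} = |N(u⁰(x_{i−1}, y_{j−1}))|`. -/
def coefN (X Y : ℝ) (N₁ N₂ : ℕ) (N : ℝ → ℝ) (u0 : ℝ × ℝ → ℝ) (i j : ℕ) : ℝ :=
  |N (u0 (meshNode X Y N₁ N₂ i j))|

/-- `L_{i,j} = sup_{(x,y) ∈ P̄_{i,j}, θ ∈ [0,1]} |𝓝′(u⁰_{i,j} − θ(u⁰_{i,j} − u(x,y)))|`,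
where `𝓝(v) = N(v)·v`. -/
def coefL (X Y : ℝ) (N₁ N₂ : ℕ) (N : ℝ → ℝ) (u u0 : ℝ × ℝ → ℝ) (i j : ℕ) : ℝ :=
  ⨆ p ∈ cellCl X Y N₁ N₂ i j, ⨆ θ ∈ Icc (0 : ℝ) 1,
    |deriv (fun v => N v * v)
      (u0 (meshNode X Y N₁ N₂ i j) - θ * (u0 (meshNode X Y N₁ N₂ i j) - u p))|

/-- `R_{i,j} = ₀F₁(1; N_{i,j}·h₁·h₂)`. -/
def coefR (X Y : ℝ) (N₁ N₂ : ℕ) (N : ℝ → ℝ) (u0 : ℝ × ℝ → ℝ) (i j : ℕ) : ℝ :=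
  hyp0F1 1 (coefN X Y N₁ N₂ N u0 i j * (X / N₁) * (Y / N₂))

/-- `R′_{i,j} = ₀F₁(2; N_{i,j}·h₁·h₂)·N_{i,j}`. -/
def coefR' (X Y : ℝ) (N₁ N₂ : ℕ) (N : ℝ → ℝ) (u0 : ℝ × ℝ → ℝ) (i j : ℕ) : ℝ :=
  hyp0F1 2 (coefN X Y N₁ N₂ N u0 i j * (X / N₁) * (Y / N₂)) * coefN X Y N₁ N₂ N u0 i j

/-- The constant
`A = √([sup|ψ′| + Y(sup|f| + N_α·sup|u|)]² + [sup|φ′| + X(sup|f| + N_α·sup|u|)]²)`,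
where `N_α = sup_{D̄} |N(u)|`. -/
def constA (X Y : ℝ) (N : ℝ → ℝ) (f : ℝ × ℝ → ℝ) (ψ φ : ℝ → ℝ) (u : ℝ × ℝ → ℝ) : ℝ :=
  Real.sqrt
    (((⨆ x ∈ Ioo (0 : ℝ) X, |deriv ψ x|) +
        Y * ((⨆ p ∈ clD X Y, |f p|) + (⨆ p ∈ clD X Y, |N (u p)|) * ⨆ p ∈ clD X Y, |u p|)) ^ 2 +
      ((⨆ y ∈ Ioo (0 : ℝ) Y, |deriv φ y|) +
        X * ((⨆ p ∈ clD X Y, |f p|) + (⨆ p ∈ clD X Y, |N (u p)|) * ⨆ p ∈ clD X Y, |u p|)) ^ 2)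

lemma aux_one_dim {F F' G G' : ℝ → ℝ} {a b : ℝ} (hab : a ≤ b)
    (hF : ContinuousOn F (Icc a b)) (hG : ContinuousOn G (Icc a b))
    (hF' : ∀ x ∈ Ioo a b, HasDerivAt F (F' x) x)
    (hG' : ∀ x ∈ Ioo a b, HasDerivAt G (G' x) x)
    (hb : ∀ x ∈ Ioo a b, |F' x| ≤ G' x) : |F b - F a| ≤ G b - G a := by
  have h1 : MonotoneOn (fun x => G x - F x) (Icc a b) := by
    refine monotoneOn_of_deriv_nonneg (convex_Icc a b) (hG.sub hF) ?_ ?_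
    · rw [interior_Icc]
      intro x hx
      exact ((hG' x hx).sub (hF' x hx)).differentiableAt.differentiableWithinAt
    · rw [interior_Icc]
      intro x hx
      have := ((hG' x hx).sub (hF' x hx)).deriv
      change 0 ≤ deriv (G - F) x
      rw [this]
      have := (abs_le.1 (hb x hx)).2
      linarith
  have h2 : MonotoneOn (fun x => G x + F x) (Icc a b) := by
    refine monotoneOn_of_deriv_nonneg (convex_Icc a b) (hG.add hF) ?_ ?_
    · rw [interior_Icc]
      intro x hx
      exact ((hG' x hx).add (hF' x hx)).differentiableAt.differentiableWithinAt
    · rw [interior_Icc]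
      intro x hx
      have := ((hG' x hx).add (hF' x hx)).deriv
      change 0 ≤ deriv (G + F) x
      rw [this]
      have := (abs_le.1 (hb x hx)).1
      linarith
  have e1 := h1 (left_mem_Icc.2 hab) (right_mem_Icc.2 hab) hab
  have e2 := h2 (left_mem_Icc.2 hab) (right_mem_Icc.2 hab) hab
  simp only at e1 e2
  rw [abs_le]
  constructor <;> linarith

lemma aux_poly_deriv (G : ℝ) (n : ℕ) (C : ℕ → ℝ) (c t : ℝ) :
    HasDerivAt (fun t : ℝ => G * (t - c) + ∑ k ∈ Finset.range n,
      C k * (t - c) ^ (k + 1) / ((k : ℝ) + 1))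
      (G + ∑ k ∈ Finset.range n, C k * (t - c) ^ k) t := by
  have h0 : HasDerivAt (fun t : ℝ => t - c) 1 t := (hasDerivAt_id t).sub_const c
  refine HasDerivAt.add ?_ ?_
  · simpa using h0.const_mul G
  · refine HasDerivAt.fun_sum fun k _ => ?_
    have h := ((h0.pow (k + 1)).const_mul (C k)).div_const ((k : ℝ) + 1)
    have hk : (k : ℝ) + 1 ≠ 0 := by positivity
    have e : C k * (((k + 1 : ℕ) : ℝ) * (t - c) ^ (k + 1 - 1) * 1) / ((k : ℝ) + 1) =
        C k * (t - c) ^ k := by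
      rw [div_eq_iff hk]
      push_cast
      simp
      ring
    rw [e] at h
    exact h

/-- Mean value estimate for mixed differences, for `b < b₁ < b₂ < b'`. -/
lemma aux_rect_inner {z zx zxy : ℝ × ℝ → ℝ} {a a' b b' : ℝ} (ha : a ≤ a')
    (hz : ContinuousOn z (Icc a a' ×ˢ Icc b b'))
    (hzx : ∀ p ∈ Ioo a a' ×ˢ Ioo b b', HasDerivAt (fun t => z (t, p.2)) (zx p) p.1)
    (hzxy : ∀ p ∈ Ioo a a' ×ˢ Ioo b b', HasDerivAt (fun t => zx (p.1, t)) (zxy p) p.2)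
    (G : ℝ) (hG : 0 ≤ G) (n : ℕ) (C : ℕ → ℝ) (hC : ∀ k, 0 ≤ C k)
    (hb : ∀ p ∈ Ioo a a' ×ˢ Ioo b b',
      |zxy p| ≤ G + ∑ k ∈ Finset.range n, C k * ((p.1 - a) ^ k * (p.2 - b) ^ k))
    {y₁ y₂ : ℝ} (h1 : b < y₁) (h12 : y₁ ≤ y₂) (h2 : y₂ < b') :
    |z (a', y₂) - z (a, y₂) - z (a', y₁) + z (a, y₁)| ≤
      G * ((a' - a) * (b' - b)) + ∑ k ∈ Finset.range n,
        C k * ((a' - a) * (b' - b)) ^ (k + 1) / ((k : ℝ) + 1) ^ 2 := by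
  have hcy : ∀ y ∈ Ioo b b', ContinuousOn (fun x => z (x, y)) (Icc a a') := by
    intro y hy
    refine hz.comp (by fun_prop) ?_
    intro x hx
    exact ⟨hx, Ioo_subset_Icc_self hy⟩
  have hy1 : y₁ ∈ Ioo b b' := ⟨h1, by linarith⟩
  have hy2 : y₂ ∈ Ioo b b' := ⟨by linarith, h2⟩
  have hbb : 0 ≤ b' - b := by linarith [hy1.1, hy1.2]
  have key := aux_one_dim (F := fun x => z (x, y₂) - z (x, y₁))
    (F' := fun x => zx (x, y₂) - zx (x, y₁))
    (G := fun x => (G * (b' - b)) * (x - a) + ∑ k ∈ Finset.range n,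
      (C k * (b' - b) ^ (k + 1) / ((k : ℝ) + 1)) * (x - a) ^ (k + 1) / ((k : ℝ) + 1))
    (G' := fun x => (G * (b' - b)) + ∑ k ∈ Finset.range n,
      (C k * (b' - b) ^ (k + 1) / ((k : ℝ) + 1)) * (x - a) ^ k) ha
    ((hcy _ hy2).sub (hcy _ hy1)) (by fun_prop)
    (fun x hx => (hzx (x, y₂) ⟨hx, hy2⟩).sub (hzx (x, y₁) ⟨hx, hy1⟩))
    (fun x _ => aux_poly_deriv _ n (fun k => C k * (b' - b) ^ (k + 1) / ((k : ℝ) + 1)) a x)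
    (by
      intro x hx
      have hmem : ∀ t ∈ Icc y₁ y₂, (x, t) ∈ Ioo a a' ×ˢ Ioo b b' := fun t ht =>
        ⟨hx, by constructor <;> simp only <;> linarith [ht.1, ht.2]⟩
      have hxa : 0 ≤ x - a := by linarith [hx.1]
      have h := aux_one_dim (F := fun t => zx (x, t)) (F' := fun t => zxy (x, t))
        (G := fun t => G * (t - b) + ∑ k ∈ Finset.range n,
          (C k * (x - a) ^ k) * (t - b) ^ (k + 1) / ((k : ℝ) + 1))
        (G' := fun t => G + ∑ k ∈ Finset.range n, (C k * (x - a) ^ k) * (t - b) ^ k) h12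
        (fun t ht => (hzxy (x, t) (hmem t ht)).continuousAt.continuousWithinAt) (by fun_prop)
        (fun t ht => hzxy (x, t) (hmem t (Ioo_subset_Icc_self ht)))
        (fun t _ => aux_poly_deriv _ n (fun k => C k * (x - a) ^ k) b t)
        (fun t ht => by
          have := hb (x, t) (hmem t (Ioo_subset_Icc_self ht))
          simpa only [mul_assoc] using this)
      refine h.trans ?_
      have e1 : 0 ≤ G * (y₁ - b) + ∑ k ∈ Finset.range n,
          (C k * (x - a) ^ k) * (y₁ - b) ^ (k + 1) / ((k : ℝ) + 1) := by
        have : 0 ≤ y₁ - b := by linarith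
        refine add_nonneg (by positivity) (Finset.sum_nonneg fun k _ => ?_)
        have := hC k
        positivity
      have e2 : G * (y₂ - b) + ∑ k ∈ Finset.range n,
          (C k * (x - a) ^ k) * (y₂ - b) ^ (k + 1) / ((k : ℝ) + 1) ≤
          (G * (b' - b)) + ∑ k ∈ Finset.range n,
      (C k * (b' - b) ^ (k + 1) / ((k : ℝ) + 1)) * (x - a) ^ k := by
        have hp : 0 ≤ y₂ - b := by linarith
        refine add_le_add (by gcongr) (Finset.sum_le_sum fun k _ => ?_)
        have hk := hC k
        calc (C k * (x - a) ^ k) * (y₂ - b) ^ (k + 1) / ((k : ℝ) + 1)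
            ≤ (C k * (x - a) ^ k) * (b' - b) ^ (k + 1) / ((k : ℝ) + 1) := by gcongr
          _ = _ := by ring
      linarith)
  have e0 : z (a', y₂) - z (a, y₂) - z (a', y₁) + z (a, y₁) =
      z (a', y₂) - z (a', y₁) - (z (a, y₂) - z (a, y₁)) := by ring
  rw [e0]
  refine key.trans (le_of_eq ?_)
  simp only [sub_self, mul_zero, zero_div, ne_eq, Nat.succ_ne_zero, not_false_eq_true, zero_pow,
    Finset.sum_const_zero, add_zero, sub_zero]
  congr 1
  · ring
  · refine Finset.sum_congr rfl fun k _ => ?_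
    rw [mul_pow]
    field_simp

/-- Mean value estimate for the mixed difference over a closed rectangle. -/
lemma aux_rect {z zx zxy : ℝ × ℝ → ℝ} {a a' b b' : ℝ} (ha : a ≤ a') (hbb : b ≤ b')
    (hz : ContinuousOn z (Icc a a' ×ˢ Icc b b'))
    (hzx : ∀ p ∈ Ioo a a' ×ˢ Ioo b b', HasDerivAt (fun t => z (t, p.2)) (zx p) p.1)
    (hzxy : ∀ p ∈ Ioo a a' ×ˢ Ioo b b', HasDerivAt (fun t => zx (p.1, t)) (zxy p) p.2)
    (G : ℝ) (hG : 0 ≤ G) (n : ℕ) (C : ℕ → ℝ) (hC : ∀ k, 0 ≤ C k)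
    (hb : ∀ p ∈ Ioo a a' ×ˢ Ioo b b',
      |zxy p| ≤ G + ∑ k ∈ Finset.range n, C k * ((p.1 - a) ^ k * (p.2 - b) ^ k)) :
    |z (a', b') - z (a, b') - z (a', b) + z (a, b)| ≤
      G * ((a' - a) * (b' - b)) + ∑ k ∈ Finset.range n,
        C k * ((a' - a) * (b' - b)) ^ (k + 1) / ((k : ℝ) + 1) ^ 2 := by
  set W := G * ((a' - a) * (b' - b)) + ∑ k ∈ Finset.range n,
        C k * ((a' - a) * (b' - b)) ^ (k + 1) / ((k : ℝ) + 1) ^ 2 with hW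
  have hW0 : 0 ≤ W := by
    have : 0 ≤ a' - a := by linarith
    have : 0 ≤ b' - b := by linarith
    refine add_nonneg (by positivity) (Finset.sum_nonneg fun k _ => ?_)
    have := hC k
    positivity
  rcases hbb.eq_or_lt with rfl | hlt
  · have : z (a', b) - z (a, b) - z (a', b) + z (a, b) = 0 := by ring
    rw [this, abs_zero]
    exact hW0
  have hcx : ∀ x ∈ Icc a a', ContinuousOn (fun y => z (x, y)) (Icc b b') := by
    intro x hx
    refine hz.comp (by fun_prop) ?_
    intro y hy
    exact ⟨hx, hy⟩
  have hca := hcx a (left_mem_Icc.2 ha)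
  have hca' := hcx a' (right_mem_Icc.2 ha)
  set m := (b + b') / 2 with hm
  have hm1 : b < m := by rw [hm]; linarith
  have hm2 : m < b' := by rw [hm]; linarith
  -- move the upper edge to `b'`
  have s1 : ∀ y₁ ∈ Ioo b m, |z (a', b') - z (a, b') - z (a', y₁) + z (a, y₁)| ≤ W := by
    intro y₁ hy₁
    have hcl : closure (Ioo m b') = Icc m b' := closure_Ioo hm2.ne
    have hsub : Icc m b' ⊆ Icc b b' := Icc_subset_Icc_left hm1.le
    refine le_on_closure (s := Ioo m b')
      (f := fun y => |z (a', y) - z (a, y) - z (a', y₁) + z (a, y₁)|) (g := fun _ => W)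
      (fun y hy => ?_) ?_ continuousOn_const (hcl ▸ right_mem_Icc.2 hm2.le)
    · exact aux_rect_inner ha hz hzx hzxy G hG n C hC hb hy₁.1 (hy₁.2.trans hy.1).le hy.2
    · rw [hcl]
      exact ((((hca'.mono hsub).sub (hca.mono hsub)).sub continuousOn_const).add
        continuousOn_const).abs
  have hcl : closure (Ioo b m) = Icc b m := closure_Ioo hm1.ne
  have hsub : Icc b m ⊆ Icc b b' := Icc_subset_Icc_right hm2.le
  refine le_on_closure (s := Ioo b m)
      (f := fun y => |z (a', b') - z (a, b') - z (a', y) + z (a, y)|) (g := fun _ => W)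
      s1 ?_ continuousOn_const (hcl ▸ left_mem_Icc.2 hm1.le)
  rw [hcl]
  exact ((continuousOn_const.sub (hca'.mono hsub)).add (hca.mono hsub)).abs

lemma aux_summable (w : ℝ) (hw : 0 ≤ w) :
    Summable (fun n : ℕ => w ^ n / ((n.factorial : ℝ) ^ 2)) := by
  refine Summable.of_nonneg_of_le (fun n => by positivity) (fun n => ?_)
    (Real.summable_pow_div_factorial w)
  have h1 : (1 : ℝ) ≤ n.factorial := by exact_mod_cast n.factorial_pos
  gcongr
  nlinarith

lemma aux_hyp_one (w : ℝ) : hyp0F1 1 w = ∑' n : ℕ, w ^ n / ((n.factorial : ℝ) ^ 2) := by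
  unfold hyp0F1
  refine tsum_congr fun n => ?_
  have : ∏ m ∈ Finset.range n, ((1 : ℝ) + (m : ℝ)) = n.factorial := by
    rw [← Finset.prod_range_add_one_eq_factorial]
    push_cast
    exact Finset.prod_congr rfl fun m _ => by ring
  rw [this, sq]

lemma aux_hyp_two (w : ℝ) :
    hyp0F1 2 w = ∑' n : ℕ, w ^ n / (((n + 1).factorial : ℝ) * n.factorial) := by
  unfold hyp0F1
  refine tsum_congr fun n => ?_
  have : ∏ m ∈ Finset.range n, ((2 : ℝ) + (m : ℝ)) = (n + 1).factorial := by
    induction n with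
    | zero => simp
    | succ n ih =>
      rw [Finset.prod_range_succ, ih, Nat.factorial_succ (n + 1)]
      push_cast
      ring
  rw [this]

lemma aux_hyp_le (w : ℝ) (hw : 0 ≤ w) : hyp0F1 1 w ≤ 1 + w * hyp0F1 2 w := by
  rw [aux_hyp_one, aux_hyp_two, (aux_summable w hw).tsum_eq_zero_add, ← tsum_mul_left]
  simp only [pow_zero, Nat.factorial_zero, Nat.cast_one, one_pow, div_one]
  have hs2 : Summable (fun n : ℕ => w ^ n / (((n + 1).factorial : ℝ) * n.factorial)) := by
    refine Summable.of_nonneg_of_le (fun n => by positivity) (fun n => ?_)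
      (aux_summable w hw)
    have h1 : (n.factorial : ℝ) ≤ (n + 1).factorial := by
      exact_mod_cast Nat.factorial_le (Nat.le_succ n)
    rw [sq]
    gcongr
  have hle : ∑' n : ℕ, w ^ (n + 1) / (((n + 1).factorial : ℝ) ^ 2) ≤
      ∑' n : ℕ, w * (w ^ n / (((n + 1).factorial : ℝ) * n.factorial)) := by
    refine Summable.tsum_le_tsum (fun n => ?_)
      ((summable_nat_add_iff 1).2 (aux_summable w hw)) (hs2.mul_left w)
    have h1 : (n.factorial : ℝ) ≤ (n + 1).factorial := by
      exact_mod_cast Nat.factorial_le (Nat.le_succ n)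
    rw [pow_succ', mul_div_assoc, sq]
    gcongr
  linarith

lemma aux_hyp_nonneg (w : ℝ) (hw : 0 ≤ w) : 0 ≤ hyp0F1 1 w := by
  rw [aux_hyp_one]
  exact tsum_nonneg fun n => by positivity

/-- Two-dimensional Gronwall inequality on a rectangle. -/
lemma aux_gronwall {z zx zxy : ℝ × ℝ → ℝ} {a a' b b' : ℝ} (ha : a ≤ a') (hbb : b ≤ b')
    (hz : ContinuousOn z (Icc a a' ×ˢ Icc b b'))
    (hzx : ∀ p ∈ Ioo a a' ×ˢ Ioo b b', HasDerivAt (fun t => z (t, p.2)) (zx p) p.1)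
    (hzxy : ∀ p ∈ Ioo a a' ×ˢ Ioo b b', HasDerivAt (fun t => zx (p.1, t)) (zxy p) p.2)
    (G K c0 : ℝ) (hG : 0 ≤ G) (hK : 0 ≤ K) (hc0 : 0 ≤ c0)
    (hb : ∀ p ∈ Ioo a a' ×ˢ Ioo b b', |zxy p| ≤ G + K * |z p|)
    (hbd : ∀ p ∈ Icc a a' ×ˢ Icc b b', |z (a, p.2) + z (p.1, b) - z (a, b)| ≤ c0) :
    ∀ p ∈ Icc a a' ×ˢ Icc b b', |z p| ≤
      (c0 + (a' - a) * (b' - b) * G) * hyp0F1 1 (K * ((a' - a) * (b' - b))) := by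
  obtain ⟨M, hM⟩ := (isCompact_Icc.prod isCompact_Icc).exists_bound_of_continuousOn hz
  set T := (a' - a) * (b' - b) with hT
  have hT0 : 0 ≤ T := mul_nonneg (by linarith) (by linarith)
  set c := c0 + T * G with hc
  have hcc : 0 ≤ c := by positivity
  have hM0 : 0 ≤ M := (norm_nonneg _).trans
    (hM (a, b) ⟨left_mem_Icc.2 ha, left_mem_Icc.2 hbb⟩)
  have step : ∀ n : ℕ, ∀ p ∈ Icc a a' ×ˢ Icc b b', |z p| ≤
      ∑ k ∈ Finset.range (n + 1), (if k < n then c else M) *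
        ((K * ((p.1 - a) * (p.2 - b))) ^ k / ((k.factorial : ℝ) ^ 2)) := by
    intro n
    induction n with
    | zero => intro p hp; simpa using hM p hp
    | succ n ih =>
      rintro ⟨x, y⟩ ⟨hx, hy⟩
      simp only at hx hy
      have hsx : Icc a x ⊆ Icc a a' := Icc_subset_Icc_right hx.2
      have hsy : Icc b y ⊆ Icc b b' := Icc_subset_Icc_right hy.2
      have hsx' : Ioo a x ⊆ Ioo a a' := Ioo_subset_Ioo_right hx.2
      have hsy' : Ioo b y ⊆ Ioo b b' := Ioo_subset_Ioo_right hy.2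
      have hss := prod_mono hsx' hsy'
      set D : ℕ → ℝ := fun k => if k < n then c else M with hD
      have hD0 : ∀ k, 0 ≤ D k := by intro k; simp only [hD]; split_ifs <;> assumption
      have h := aux_rect (z := z) (zx := zx) (zxy := zxy) hx.1 hy.1
        (hz.mono (prod_mono hsx hsy)) (fun p hp => hzx p (hss hp)) (fun p hp => hzxy p (hss hp))
        G hG (n + 1) (fun k => D k * (K ^ (k + 1) / ((k.factorial : ℝ) ^ 2)))
        (fun k => mul_nonneg (hD0 k) (by positivity))
        (by
          intro p hp
          refine (hb p (hss hp)).trans ?_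
          have := ih p (prod_mono Ioo_subset_Icc_self Ioo_subset_Icc_self (hss hp))
          gcongr
          refine (mul_le_mul_of_nonneg_left this hK).trans (le_of_eq ?_)
          rw [Finset.mul_sum]
          refine Finset.sum_congr rfl fun k _ => ?_
          rw [mul_pow, mul_pow]
          ring)
      have hxy : (x - a) * (y - b) ≤ T := by
        rw [hT]
        have := hx.1; have := hx.2; have := hy.1; have := hy.2
        apply mul_le_mul <;> linarith
      have h2 := hbd (x, y) ⟨hx, hy⟩
      simp only at h2
      have e : |z (x, y)| ≤ |z (x, y) - z (a, y) - z (x, b) + z (a, b)| +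
          |z (a, y) + z (x, b) - z (a, b)| := by
        refine le_trans (le_of_eq ?_) (abs_add_le _ _)
        congr 1; ring
      rw [Finset.sum_range_succ']
      have e3 : ∀ k, (if k + 1 < n + 1 then c else M) = D k := by
        intro k; simp [hD]
      simp only [e3]
      have e4 : ∀ k : ℕ, D k * (K ^ (k + 1) / ((k.factorial : ℝ) ^ 2)) *
          ((x - a) * (y - b)) ^ (k + 1) / ((k : ℝ) + 1) ^ 2 =
          D k * ((K * ((x - a) * (y - b))) ^ (k + 1) / (((k + 1).factorial : ℝ) ^ 2)) := by
        intro k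
        rw [Nat.factorial_succ]
        push_cast
        rw [mul_pow K]
        field_simp
      simp only [e4] at h
      have h5 : G * ((x - a) * (y - b)) ≤ T * G := by nlinarith
      simp only [Nat.zero_lt_succ, if_true, pow_zero, Nat.factorial_zero, Nat.cast_one, one_pow,
        div_one, mul_one]
      linarith
  rintro ⟨x, y⟩ hp
  set w := K * T with hw
  have hw0 : 0 ≤ w := by positivity
  have hxy : (x - a) * (y - b) ≤ T := by
    rw [hT]
    have := hp.1.1; have := hp.1.2; have := hp.2.1; have := hp.2.2
    simp only at *
    apply mul_le_mul <;> linarith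
  have hxy0 : 0 ≤ (x - a) * (y - b) :=
    mul_nonneg (by linarith [hp.1.1]) (by linarith [hp.2.1])
  have hxw : K * ((x - a) * (y - b)) ≤ w := mul_le_mul_of_nonneg_left hxy hK
  have hsum := aux_summable w hw0
  have hn : ∀ n : ℕ, |z (x, y)| ≤ c * hyp0F1 1 w + M * (w ^ n / ((n.factorial : ℝ) ^ 2)) := by
    intro n
    refine (step n (x, y) hp).trans ?_
    rw [Finset.sum_range_succ]
    simp only [lt_irrefl, if_false]
    refine add_le_add ?_ ?_
    · rw [aux_hyp_one]
      calc _ ≤ ∑ k ∈ Finset.range n, c * (w ^ k / ((k.factorial : ℝ) ^ 2)) := by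
            refine Finset.sum_le_sum fun k hk => ?_
            rw [if_pos (Finset.mem_range.1 hk)]
            gcongr
        _ = c * ∑ k ∈ Finset.range n, (w ^ k / ((k.factorial : ℝ) ^ 2)) := by
            rw [Finset.mul_sum]
        _ ≤ _ := by
            gcongr
            exact hsum.sum_le_tsum _ (fun k _ => by positivity)
    · gcongr
  have hlim : Filter.Tendsto
      (fun n : ℕ => c * hyp0F1 1 w + M * (w ^ n / ((n.factorial : ℝ) ^ 2)))
      Filter.atTop (nhds (c * hyp0F1 1 w + M * 0)) :=
    (hsum.tendsto_atTop_zero.const_mul M).const_add _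
  have := ge_of_tendsto' hlim hn
  simpa using this

lemma aux_le_bisup {α : Type*} {S : Set α} {g : α → ℝ} (h0 : ∀ p, 0 ≤ g p)
    (hb : BddAbove (g '' S)) {p : α} (hp : p ∈ S) : g p ≤ ⨆ q ∈ S, g q := by
  obtain ⟨B, hB⟩ := hb
  refine le_ciSup_of_le ⟨max B 0, ?_⟩ p (by simp [hp])
  rintro _ ⟨q, rfl⟩
  by_cases hq : q ∈ S
  · simp only [hq, ciSup_unique]
    exact (hB (mem_image_of_mem g hq)).trans (le_max_left _ _)
  · simp [hq]

lemma aux_bisup_le {α : Type*} {S : Set α} {g : α → ℝ} {c : ℝ} (hc : 0 ≤ c)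
    (h : ∀ p ∈ S, g p ≤ c) : ⨆ q ∈ S, g q ≤ c := by
  refine Real.iSup_le (fun q => Real.iSup_le (fun hq => h q hq) hc) hc

lemma aux_bisup_nonneg {α : Type*} {S : Set α} {g : α → ℝ} (h0 : ∀ p, 0 ≤ g p) :
    0 ≤ ⨆ q ∈ S, g q :=
  Real.iSup_nonneg fun q => Real.iSup_nonneg fun _ => h0 q

lemma aux_bdd {S : Set (ℝ × ℝ)} (hS : IsCompact S) {g : ℝ × ℝ → ℝ} (hg : ContinuousOn g S) :
    BddAbove ((fun p => |g p|) '' S) :=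
  hS.bddAbove_image hg.abs

lemma aux_contDiff {ν : ℕ → ℝ} {N : ℝ → ℝ}
    (hN : ∀ v : ℝ, HasSum (fun s : ℕ => ν s * v ^ s) (N v)) : ContDiff ℝ 1 N := by
  have hr : (FormalMultilinearSeries.ofScalars ℝ ν).radius = ⊤ := by
    refine FormalMultilinearSeries.radius_eq_top_of_summable_norm _ fun r => ?_
    have := (hN r).summable.norm
    refine this.congr fun n => ?_
    rw [FormalMultilinearSeries.ofScalars_norm, norm_mul, norm_pow]
    simp
  have hp : HasFPowerSeriesOnBall N (FormalMultilinearSeries.ofScalars ℝ ν) 0 ⊤ := by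
    refine ⟨hr.ge, by simp, fun {y} _ => ?_⟩
    simpa [FormalMultilinearSeries.ofScalars_apply_eq, mul_comm] using hN y
  rw [contDiff_iff_contDiffAt]
  intro v
  exact (hp.analyticOnNhd v (by simp)).contDiffAt

lemma aux_contDiff_mul {ν : ℕ → ℝ} {N : ℝ → ℝ}
    (hN : ∀ v : ℝ, HasSum (fun s : ℕ => ν s * v ^ s) (N v)) :
    ContDiff ℝ 1 (fun v => N v * v) :=
  (aux_contDiff hN).mul contDiff_id

lemma aux_clD_compact (X Y : ℝ) : IsCompact (clD X Y) := isCompact_Icc.prod isCompact_Icc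

lemma aux_cell_compact (X Y : ℝ) (N₁ N₂ i j : ℕ) : IsCompact (cellCl X Y N₁ N₂ i j) :=
  isCompact_Icc.prod isCompact_Icc

/-- Lipschitz bound of `u`. -/
lemma aux_uLip (X Y : ℝ) (hX : 0 < X) (hY : 0 < Y)
    (N : ℝ → ℝ) (hNc : Continuous N)
    (f : ℝ × ℝ → ℝ) (hf : ContinuousOn f (clD X Y))
    (ψ φ : ℝ → ℝ)
    (hψc : ContinuousOn ψ (Icc 0 X))
    (hψd : ∀ x ∈ Ioo (0 : ℝ) X, DifferentiableAt ℝ ψ x)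
    (hφc : ContinuousOn φ (Icc 0 Y))
    (hφd : ∀ y ∈ Ioo (0 : ℝ) Y, DifferentiableAt ℝ φ y)
    (u : ℝ × ℝ → ℝ) (hu : GoursatSol X Y N f ψ φ u)
    (hbψ : BddAbove ((fun x => |deriv ψ x|) '' Ioo 0 X))
    (hbφ : BddAbove ((fun y => |deriv φ y|) '' Ioo 0 Y))
    {x x' y y' d₁ d₂ : ℝ} (hx' : 0 ≤ x') (hxx : x' ≤ x) (hx : x ≤ X)
    (hy' : 0 ≤ y') (hyy : y' ≤ y) (hy : y ≤ Y) (hd1 : x - x' ≤ d₁) (hd2 : y - y' ≤ d₂) :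
    |u (x, y) - u (x', y')| ≤ Real.sqrt (d₁ ^ 2 + d₂ ^ 2) * constA X Y N f ψ φ u := by
  set F := ⨆ p ∈ clD X Y, |f p| with hF
  set Na := ⨆ p ∈ clD X Y, |N (u p)| with hNa
  set U := ⨆ p ∈ clD X Y, |u p| with hU
  set Ps := ⨆ x ∈ Ioo (0 : ℝ) X, |deriv ψ x| with hPs
  set Ph := ⨆ y ∈ Ioo (0 : ℝ) Y, |deriv φ y| with hPh
  have hF0 : 0 ≤ F := aux_bisup_nonneg fun p => abs_nonneg _
  have hNa0 : 0 ≤ Na := aux_bisup_nonneg fun p => abs_nonneg _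
  have hU0 : 0 ≤ U := aux_bisup_nonneg fun p => abs_nonneg _
  have hPs0 : 0 ≤ Ps := aux_bisup_nonneg fun p => abs_nonneg _
  have hPh0 : 0 ≤ Ph := aux_bisup_nonneg fun p => abs_nonneg _
  set C := F + Na * U with hC
  have hC0 : 0 ≤ C := by positivity
  have hNu : ContinuousOn (fun p => N (u p)) (clD X Y) := hNc.comp_continuousOn hu.cont
  have hsub : opD X Y ⊆ clD X Y := prod_mono Ioo_subset_Icc_self Ioo_subset_Icc_self
  have hbound : ∀ p ∈ opD X Y, |pdxy u p| ≤ C := by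
    intro p hp
    have e : pdxy u p = f p - N (u p) * u p := by linarith [hu.eqn p hp]
    have h1 : |f p| ≤ F := aux_le_bisup (fun p => abs_nonneg _)
      (aux_bdd (aux_clD_compact X Y) hf) (hsub hp)
    have h2 : |N (u p)| ≤ Na := aux_le_bisup (g := fun p => |N (u p)|) (fun p => abs_nonneg _)
      (aux_bdd (aux_clD_compact X Y) hNu) (hsub hp)
    have h3 : |u p| ≤ U := aux_le_bisup (fun p => abs_nonneg _)
      (aux_bdd (aux_clD_compact X Y) hu.cont) (hsub hp)
    rw [e]
    refine (abs_sub _ _).trans ?_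
    rw [abs_mul, hC]
    gcongr
  have hrect : ∀ a a' b b' : ℝ, 0 ≤ a → a ≤ a' → a' ≤ X → 0 ≤ b → b ≤ b' → b' ≤ Y →
      |u (a', b') - u (a, b') - u (a', b) + u (a, b)| ≤ C * ((a' - a) * (b' - b)) := by
    intro a a' b b' h0 h1 h2 h3 h4 h5
    have hs : Ioo a a' ×ˢ Ioo b b' ⊆ opD X Y :=
      prod_mono (Ioo_subset_Ioo h0 h2) (Ioo_subset_Ioo h3 h5)
    have := aux_rect (z := u) (zx := pdx u) (zxy := pdxy u) h1 h4
      (hu.cont.mono (prod_mono (Icc_subset_Icc h0 h2) (Icc_subset_Icc h3 h5)))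
      (fun p hp => (hu.diffx p (hs hp)).hasDerivAt)
      (fun p hp => (hu.diffxy p (hs hp)).hasDerivAt) C hC0 0 (fun _ => 0) (fun _ => le_rfl)
      (fun p hp => by simpa using hbound p (hs hp))
    simpa using this
  have hψL : |ψ x - ψ x'| ≤ Ps * (x - x') := by
    have := aux_one_dim (F := ψ) (F' := deriv ψ) (G := fun t => Ps * t) (G' := fun _ => Ps) hxx
      (hψc.mono (Icc_subset_Icc hx' hx)) (by fun_prop)
      (fun t ht => (hψd t (Ioo_subset_Ioo hx' hx ht)).hasDerivAt)
      (fun t _ => by simpa using (hasDerivAt_id t).const_mul Ps)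
      (fun t ht => aux_le_bisup (g := fun x => |deriv ψ x|) (fun p => abs_nonneg _) hbψ
        (Ioo_subset_Ioo hx' hx ht))
    simpa [mul_sub] using this
  have hφL : |φ y - φ y'| ≤ Ph * (y - y') := by
    have := aux_one_dim (F := φ) (F' := deriv φ) (G := fun t => Ph * t) (G' := fun _ => Ph) hyy
      (hφc.mono (Icc_subset_Icc hy' hy)) (by fun_prop)
      (fun t ht => (hφd t (Ioo_subset_Ioo hy' hy ht)).hasDerivAt)
      (fun t _ => by simpa using (hasDerivAt_id t).const_mul Ph)
      (fun t ht => aux_le_bisup (g := fun x => |deriv φ x|) (fun p => abs_nonneg _) hbφ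
        (Ioo_subset_Ioo hy' hy ht))
    simpa [mul_sub] using this
  have r1 := hrect x' x 0 y hx' hxx hx le_rfl (hy'.trans hyy) hy
  have r2 := hrect 0 x' y' y le_rfl hx' (hxx.trans hx) hy' hyy hy
  rw [hu.bc1 x ⟨hx'.trans hxx, hx⟩, hu.bc1 x' ⟨hx', hxx.trans hx⟩] at r1
  rw [hu.bc2 y ⟨hy'.trans hyy, hy⟩, hu.bc2 y' ⟨hy', hyy.trans hy⟩] at r2
  have t1 : C * ((x - x') * (y - 0)) ≤ Y * C * (x - x') := by
    have : 0 ≤ C * (x - x') := mul_nonneg hC0 (by linarith)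
    nlinarith
  have t2 : C * ((x' - 0) * (y - y')) ≤ X * C * (y - y') := by
    have : 0 ≤ C * (y - y') := mul_nonneg hC0 (by linarith)
    nlinarith
  have main : |u (x, y) - u (x', y')| ≤ (Ps + Y * C) * d₁ + (Ph + X * C) * d₂ := by
    have m1 : (Ps + Y * C) * (x - x') ≤ (Ps + Y * C) * d₁ := by gcongr
    have m2 : (Ph + X * C) * (y - y') ≤ (Ph + X * C) * d₂ := by gcongr
    rw [abs_le] at *
    constructor <;> linarith [r1.1, r1.2, r2.1, r2.2, hψL.1, hψL.2, hφL.1, hφL.2]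
  refine main.trans ?_
  unfold constA
  rw [← Real.sqrt_mul (by positivity)]
  refine Real.le_sqrt_of_sq_le ?_
  rw [← hF, ← hNa, ← hU, ← hPs, ← hPh, ← hC]
  nlinarith [sq_nonneg ((Ps + Y * C) * d₂ - (Ph + X * C) * d₁)]

/-- Mean value estimate through `coefL`. -/
lemma aux_L_nonneg (X Y : ℝ) (N₁ N₂ : ℕ) (N : ℝ → ℝ) (u u0 : ℝ × ℝ → ℝ) (i j : ℕ) :
    0 ≤ coefL X Y N₁ N₂ N u u0 i j :=
  aux_bisup_nonneg fun _ => aux_bisup_nonneg fun _ => abs_nonneg _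

lemma aux_L (X Y : ℝ) (N₁ N₂ : ℕ) (N : ℝ → ℝ) (hNd : ContDiff ℝ 1 (fun v => N v * v))
    (u u0 : ℝ × ℝ → ℝ) (i j : ℕ)
    (hu : ContinuousOn u (cellCl X Y N₁ N₂ i j)) {p : ℝ × ℝ} (hp : p ∈ cellCl X Y N₁ N₂ i j) :
    |N (u p) * u p - N (u0 (meshNode X Y N₁ N₂ i j)) * u0 (meshNode X Y N₁ N₂ i j)| ≤
      coefL X Y N₁ N₂ N u u0 i j * |u p - u0 (meshNode X Y N₁ N₂ i j)| := by
  set v := u0 (meshNode X Y N₁ N₂ i j) with hv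
  set L := coefL X Y N₁ N₂ N u u0 i j with hL
  have hcd : Continuous (deriv (fun v => N v * v)) := hNd.continuous_deriv le_rfl
  set g : (ℝ × ℝ) × ℝ → ℝ := fun q => |deriv (fun v => N v * v) (v - q.2 * (v - u q.1))| with hg
  have hgc : ContinuousOn g (cellCl X Y N₁ N₂ i j ×ˢ Icc (0 : ℝ) 1) := by
    refine (hcd.comp_continuousOn ?_).abs
    refine continuousOn_const.sub (continuousOn_snd.mul (continuousOn_const.sub ?_))
    exact hu.comp continuousOn_fst (fun q hq => hq.1)
  obtain ⟨B, hB⟩ := ((aux_cell_compact X Y N₁ N₂ i j).prod isCompact_Icc).bddAbove_image hgc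
  have hB' : ∀ q ∈ cellCl X Y N₁ N₂ i j, ∀ θ ∈ Icc (0 : ℝ) 1, g (q, θ) ≤ B := fun q hq θ hθ =>
    hB (mem_image_of_mem g ⟨hq, hθ⟩)
  have hB0 : 0 ≤ B := (abs_nonneg _).trans (hB' p hp 0 (by simp))
  have hLb : ∀ θ ∈ Icc (0 : ℝ) 1, g (p, θ) ≤ L := by
    intro θ hθ
    have h1 : g (p, θ) ≤ ⨆ θ ∈ Icc (0 : ℝ) 1, g (p, θ) := by
      refine aux_le_bisup (g := fun θ => g (p, θ)) (fun _ => abs_nonneg _) ⟨B, ?_⟩ hθ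
      rintro _ ⟨θ', hθ', rfl⟩
      exact hB' p hp θ' hθ'
    refine h1.trans ?_
    refine aux_le_bisup (g := fun q => ⨆ θ ∈ Icc (0 : ℝ) 1, g (q, θ))
      (fun _ => aux_bisup_nonneg fun _ => abs_nonneg _) ⟨B, ?_⟩ hp
    rintro _ ⟨q, hq, rfl⟩
    exact aux_bisup_le hB0 (fun θ hθ => hB' q hq θ hθ)
  have hd : ∀ θ : ℝ, HasDerivAt (fun θ : ℝ => (fun v => N v * v) (v - θ * (v - u p)))
      (deriv (fun v => N v * v) (v - θ * (v - u p)) * (-(v - u p))) θ := by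
    intro θ
    have h1 : HasDerivAt (fun θ : ℝ => v - θ * (v - u p)) (-(v - u p)) θ := by
      simpa using ((hasDerivAt_id θ).mul_const (v - u p)).const_sub v
    have h2 := ((hNd.differentiable one_ne_zero) (v - θ * (v - u p))).hasDerivAt
    exact h2.comp θ h1
  have := norm_image_sub_le_of_norm_deriv_le_segment_01' (C := L * |u p - v|)
    (fun θ _ => (hd θ).hasDerivWithinAt) (by
      intro θ hθ
      rw [norm_mul, Real.norm_eq_abs, Real.norm_eq_abs, neg_sub]
      exact mul_le_mul_of_nonneg_right (hLb θ (Ico_subset_Icc_self hθ)) (abs_nonneg _))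
  simpa using this

set_option maxHeartbeats 4000000

/-- Second inequality of the auxiliary lemma: with `z = u − u⁰`,
`‖z‖_{i,j} ≤ ‖z‖_{i,j−1}(1 + h₁h₂R′_{i,j})
 + h₂R_{i,j}·h₁·Σ_{s=1}^{i−1}[(2N_{s,j}+L_{s,j})‖z‖_{s,j} + h(N_{s,j}+L_{s,j})A]
 + h₁h₂R_{i,j}(L_{i,j}+N_{i,j})‖z‖_{i−1,j} + h₁h₂hR_{i,j}(N_{i,j}+L_{i,j})A`. -/
theorem z_norm_second_inequality
    (X Y : ℝ) (hX : 0 < X) (hY : 0 < Y)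
    (ν : ℕ → ℝ) (N : ℝ → ℝ)
    (hN : ∀ v : ℝ, HasSum (fun s : ℕ => ν s * v ^ s) (N v))
    (f : ℝ × ℝ → ℝ) (hf : ContinuousOn f (clD X Y))
    (ψ φ : ℝ → ℝ)
    (hψc : ContinuousOn ψ (Icc 0 X))
    (hψd : ∀ x ∈ Ioo (0 : ℝ) X, DifferentiableAt ℝ ψ x)
    (hφc : ContinuousOn φ (Icc 0 Y))
    (hφd : ∀ y ∈ Ioo (0 : ℝ) Y, DifferentiableAt ℝ φ y)
    (hcomp : ψ 0 = φ 0)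
    (N₁ N₂ : ℕ) (hN₁ : 1 ≤ N₁) (hN₂ : 1 ≤ N₂)
    (u : ℝ × ℝ → ℝ) (hu : GoursatSol X Y N f ψ φ u)
    (hbψ : BddAbove ((fun x => |deriv ψ x|) '' Ioo 0 X))
    (hbφ : BddAbove ((fun y => |deriv φ y|) '' Ioo 0 Y))
    (huex : ∀ i ∈ Finset.Icc 1 N₁, ∀ j ∈ Finset.Icc 1 N₂,
      ∃ g : ℝ × ℝ → ℝ, ContinuousOn g (cellCl X Y N₁ N₂ i j) ∧
        EqOn g (pdx u) (cellOp X Y N₁ N₂ i j))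
    (huey : ∀ i ∈ Finset.Icc 1 N₁, ∀ j ∈ Finset.Icc 1 N₂,
      ∃ g : ℝ × ℝ → ℝ, ContinuousOn g (cellCl X Y N₁ N₂ i j) ∧
        EqOn g (pdy u) (cellOp X Y N₁ N₂ i j))
    (huexy : ∀ i ∈ Finset.Icc 1 N₁, ∀ j ∈ Finset.Icc 1 N₂,
      ∃ g : ℝ × ℝ → ℝ, ContinuousOn g (cellCl X Y N₁ N₂ i j) ∧
        EqOn g (pdxy u) (cellOp X Y N₁ N₂ i j))
    (u0 : ℝ × ℝ → ℝ) (hu0 : BasicSol X Y N f ψ φ N₁ N₂ u0)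
    (hu0ex : ∀ i ∈ Finset.Icc 1 N₁, ∀ j ∈ Finset.Icc 1 N₂,
      ∃ g : ℝ × ℝ → ℝ, ContinuousOn g (cellCl X Y N₁ N₂ i j) ∧
        EqOn g (pdx u0) (cellOp X Y N₁ N₂ i j))
    (hu0ey : ∀ i ∈ Finset.Icc 1 N₁, ∀ j ∈ Finset.Icc 1 N₂,
      ∃ g : ℝ × ℝ → ℝ, ContinuousOn g (cellCl X Y N₁ N₂ i j) ∧
        EqOn g (pdy u0) (cellOp X Y N₁ N₂ i j))
    (hu0exy : ∀ i ∈ Finset.Icc 1 N₁, ∀ j ∈ Finset.Icc 1 N₂,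
      ∃ g : ℝ × ℝ → ℝ, ContinuousOn g (cellCl X Y N₁ N₂ i j) ∧
        EqOn g (pdxy u0) (cellOp X Y N₁ N₂ i j)) :
    ∀ i ∈ Finset.Icc 1 N₁, ∀ j ∈ Finset.Icc 1 N₂,
      znorm X Y N₁ N₂ (fun p => u p - u0 p) i j ≤
        znorm X Y N₁ N₂ (fun p => u p - u0 p) i (j - 1) *
            (1 + (X / N₁) * (Y / N₂) * coefR' X Y N₁ N₂ N u0 i j) +
          (Y / N₂) * coefR X Y N₁ N₂ N u0 i j *
            ((X / N₁) * ∑ s ∈ Finset.Icc 1 (i - 1),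
              ((2 * coefN X Y N₁ N₂ N u0 s j + coefL X Y N₁ N₂ N u u0 s j) *
                  znorm X Y N₁ N₂ (fun p => u p - u0 p) s j +
                meshH X Y N₁ N₂ *
                  (coefN X Y N₁ N₂ N u0 s j + coefL X Y N₁ N₂ N u u0 s j) *
                  constA X Y N f ψ φ u)) +
          (X / N₁) * (Y / N₂) * coefR X Y N₁ N₂ N u0 i j *
            (coefL X Y N₁ N₂ N u u0 i j + coefN X Y N₁ N₂ N u0 i j) *
            znorm X Y N₁ N₂ (fun p => u p - u0 p) (i - 1) j +
          (X / N₁) * (Y / N₂) * meshH X Y N₁ N₂ * coefR X Y N₁ N₂ N u0 i j *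
            (coefN X Y N₁ N₂ N u0 i j + coefL X Y N₁ N₂ N u u0 i j) *
            constA X Y N f ψ φ u := by
  have hNcd := aux_contDiff hN
  have hNNcd := aux_contDiff_mul hN
  have hN1 : (0 : ℝ) < N₁ := by exact_mod_cast hN₁
  have hN2 : (0 : ℝ) < N₂ := by exact_mod_cast hN₂
  set h₁ : ℝ := X / N₁ with hh₁
  set h₂ : ℝ := Y / N₂ with hh₂
  have h1p : 0 < h₁ := by positivity
  have h2p : 0 < h₂ := by positivity
  have hX1 : (N₁ : ℝ) * h₁ = X := by rw [hh₁]; field_simp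
  have hY1 : (N₂ : ℝ) * h₂ = Y := by rw [hh₂]; field_simp
  set A := constA X Y N f ψ φ u with hA
  have hA0 : 0 ≤ A := Real.sqrt_nonneg _
  set H := meshH X Y N₁ N₂ with hH
  have hH0 : 0 ≤ H := Real.sqrt_nonneg _
  set z : ℝ × ℝ → ℝ := fun p => u p - u0 p with hz
  set Nc := coefN X Y N₁ N₂ N u0 with hNc
  set Lc := coefL X Y N₁ N₂ N u u0 with hLc
  set Z := znorm X Y N₁ N₂ z with hZ
  have hNc0 : ∀ s j, 0 ≤ Nc s j := fun s j => abs_nonneg _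
  have hLc0 : ∀ s j, 0 ≤ Lc s j := fun s j => aux_L_nonneg ..
  -- index bounds
  have hxi : ∀ s : ℕ, 1 ≤ s → s ≤ N₁ → 0 ≤ ((s : ℝ) - 1) * h₁ ∧ (s : ℝ) * h₁ ≤ X := by
    intro s hs hs'
    have c1 : (1 : ℝ) ≤ s := by exact_mod_cast hs
    have c2 : (s : ℝ) ≤ N₁ := by exact_mod_cast hs'
    refine ⟨mul_nonneg (by linarith) h1p.le, ?_⟩
    rw [← hX1]; gcongr
  have hyj : ∀ s : ℕ, 1 ≤ s → s ≤ N₂ → 0 ≤ ((s : ℝ) - 1) * h₂ ∧ (s : ℝ) * h₂ ≤ Y := by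
    intro s hs hs'
    have c1 : (1 : ℝ) ≤ s := by exact_mod_cast hs
    have c2 : (s : ℝ) ≤ N₂ := by exact_mod_cast hs'
    refine ⟨mul_nonneg (by linarith) h2p.le, ?_⟩
    rw [← hY1]; gcongr
  have hcl : ∀ s j : ℕ, 1 ≤ s → s ≤ N₁ → 1 ≤ j → j ≤ N₂ →
      cellCl X Y N₁ N₂ s j ⊆ clD X Y := fun s j a b c d =>
    prod_mono (Icc_subset_Icc (hxi s a b).1 (hxi s a b).2)
      (Icc_subset_Icc (hyj j c d).1 (hyj j c d).2)
  have hop : ∀ s j : ℕ, 1 ≤ s → s ≤ N₁ → 1 ≤ j → j ≤ N₂ →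
      cellOp X Y N₁ N₂ s j ⊆ opD X Y := fun s j a b c d =>
    prod_mono (Ioo_subset_Ioo (hxi s a b).1 (hxi s a b).2)
      (Ioo_subset_Ioo (hyj j c d).1 (hyj j c d).2)
  have hoc : ∀ s j : ℕ, cellOp X Y N₁ N₂ s j ⊆ cellCl X Y N₁ N₂ s j := fun s j =>
    prod_mono Ioo_subset_Icc_self Ioo_subset_Icc_self
  have hzc : ContinuousOn z (clD X Y) := hu.cont.sub hu0.cont
  have hZ0 : ∀ s j, 0 ≤ Z s j := by
    intro s j
    rw [hZ]; unfold znorm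
    split_ifs
    · exact le_rfl
    · exact aux_bisup_nonneg fun _ => abs_nonneg _
  have hZle : ∀ s j : ℕ, 1 ≤ s → s ≤ N₁ → 1 ≤ j → j ≤ N₂ →
      ∀ p ∈ cellCl X Y N₁ N₂ s j, |z p| ≤ Z s j := by
    intro s j a b c d p hp
    rw [hZ]; unfold znorm
    rw [if_neg (by omega)]
    exact aux_le_bisup (g := fun p => |z p|) (fun _ => abs_nonneg _)
      (aux_bdd (aux_cell_compact X Y N₁ N₂ s j) (hzc.mono (hcl s j a b c d))) hp
  have hnode : ∀ s j, meshNode X Y N₁ N₂ s j ∈ cellCl X Y N₁ N₂ s j := by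
    intro s j
    refine ⟨left_mem_Icc.2 ?_, left_mem_Icc.2 ?_⟩
    · change ((s : ℝ) - 1) * h₁ ≤ (s : ℝ) * h₁
      nlinarith
    · change ((j : ℝ) - 1) * h₂ ≤ (j : ℝ) * h₂
      nlinarith
  -- the equation for `z`
  have hzxy : ∀ s j : ℕ, 1 ≤ s → s ≤ N₁ → 1 ≤ j → j ≤ N₂ →
      ∀ p ∈ cellOp X Y N₁ N₂ s j, |pdxy u p - pdxy u0 p| ≤
        (Nc s j + Lc s j) * (|z (meshNode X Y N₁ N₂ s j)| + H * A) + Nc s j * |z p| := by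
    intro s j a b c d p hp
    have e1 := hu.eqn p (hop s j a b c d hp)
    have e2 := hu0.eqn s (Finset.mem_Icc.2 ⟨a, b⟩) j (Finset.mem_Icc.2 ⟨c, d⟩) p hp
    have hpc := hoc s j hp
    have hLip : |u p - u (meshNode X Y N₁ N₂ s j)| ≤ H * A := by
      have b1 := hpc.1.1
      have b2 := hpc.1.2
      have b3 := hpc.2.1
      have b4 := hpc.2.2
      refine aux_uLip X Y hX hY N hNcd.continuous f hf ψ φ hψc hψd hφc hφd u hu hbψ hbφ
        (x := p.1) (y := p.2) (hxi s a b).1 b1 (b2.trans (hxi s a b).2) (hyj j c d).1 b3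
        (b4.trans (hyj j c d).2) ?_ ?_
      · change p.1 ≤ (s : ℝ) * h₁ at b2
        linarith
      · change p.2 ≤ (j : ℝ) * h₂ at b4
        linarith
    have hLL := aux_L X Y N₁ N₂ N hNNcd u u0 s j (hu.cont.mono (hcl s j a b c d)) hpc
    change _ ≤ Lc s j * _ at hLL
    have hNcd' : Nc s j = |N (u0 (meshNode X Y N₁ N₂ s j))| := rfl
    have hzp : z p = u p - u0 p := rfl
    have hzn : z (meshNode X Y N₁ N₂ s j) =
      u (meshNode X Y N₁ N₂ s j) - u0 (meshNode X Y N₁ N₂ s j) := rfl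
    set q := meshNode X Y N₁ N₂ s j
    have e3 : pdxy u p - pdxy u0 p = -(N (u p) * u p - N (u0 q) * u0 q) +
        N (u0 q) * (u p - u0 q) - N (u0 q) * z p := by
      rw [hzp]; linear_combination e1 - e2
    have e4 : |u p - u0 q| ≤ |z q| + H * A := by
      have : u p - u0 q = z q + (u p - u q) := by rw [hzn]; ring
      rw [this]
      exact (abs_add_le _ _).trans (by gcongr)
    rw [e3]
    refine (abs_sub _ _).trans ?_
    rw [abs_mul, ← hNcd']
    gcongr
    refine (abs_add_le _ _).trans ?_
    rw [abs_neg, abs_mul, ← hNcd']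
    have e5 := mul_le_mul_of_nonneg_left e4 (hLc0 s j)
    have e6 := mul_le_mul_of_nonneg_left e4 (hNc0 s j)
    linarith
  have hdx : ∀ s j : ℕ, 1 ≤ s → s ≤ N₁ → 1 ≤ j → j ≤ N₂ → ∀ p ∈ cellOp X Y N₁ N₂ s j,
      HasDerivAt (fun t => z (t, p.2)) (pdx u p - pdx u0 p) p.1 := by
    intro s j a b c d p hp
    exact (hu.diffx p (hop s j a b c d hp)).hasDerivAt.sub
      (hu0.diffx s (Finset.mem_Icc.2 ⟨a, b⟩) j (Finset.mem_Icc.2 ⟨c, d⟩) p hp).hasDerivAt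
  have hdxy : ∀ s j : ℕ, 1 ≤ s → s ≤ N₁ → 1 ≤ j → j ≤ N₂ → ∀ p ∈ cellOp X Y N₁ N₂ s j,
      HasDerivAt (fun t => (fun p => pdx u p - pdx u0 p) (p.1, t)) (pdxy u p - pdxy u0 p) p.2 := by
    intro s j a b c d p hp
    exact (hu.diffxy p (hop s j a b c d hp)).hasDerivAt.sub
      (hu0.diffxy s (Finset.mem_Icc.2 ⟨a, b⟩) j (Finset.mem_Icc.2 ⟨c, d⟩) p hp).hasDerivAt
  have hz1 : ∀ x ∈ Icc (0 : ℝ) X, z (x, 0) = 0 := by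
    intro x hx
    simp only [hz, hu.bc1 x hx, hu0.bc1 x hx, sub_self]
  have hz2 : ∀ y ∈ Icc (0 : ℝ) Y, z (0, y) = 0 := by
    intro y hy
    simp only [hz, hu.bc2 y hy, hu0.bc2 y hy, sub_self]
  -- mixed difference over one cell of the row
  have hS : ∀ s j : ℕ, 1 ≤ s → s ≤ N₁ → 1 ≤ j → j ≤ N₂ →
      ∀ y ∈ Icc (((j : ℝ) - 1) * h₂) ((j : ℝ) * h₂),
      |z ((s : ℝ) * h₁, y) - z (((s : ℝ) - 1) * h₁, y) - z ((s : ℝ) * h₁, ((j : ℝ) - 1) * h₂)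
        + z (((s : ℝ) - 1) * h₁, ((j : ℝ) - 1) * h₂)| ≤
        h₁ * h₂ * ((2 * Nc s j + Lc s j) * Z s j + H * (Nc s j + Lc s j) * A) := by
    intro s j a b c d y hy
    set S := (2 * Nc s j + Lc s j) * Z s j + H * (Nc s j + Lc s j) * A with hSd
    have hS0 : 0 ≤ S := by
      have := hNc0 s j; have := hLc0 s j; have := hZ0 s j
      positivity
    have hsub : Ioo (((s : ℝ) - 1) * h₁) ((s : ℝ) * h₁) ×ˢ Ioo (((j : ℝ) - 1) * h₂) y ⊆
        cellOp X Y N₁ N₂ s j := prod_mono Subset.rfl (Ioo_subset_Ioo_right hy.2)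
    have hsub' : Icc (((s : ℝ) - 1) * h₁) ((s : ℝ) * h₁) ×ˢ Icc (((j : ℝ) - 1) * h₂) y ⊆
        cellCl X Y N₁ N₂ s j := prod_mono Subset.rfl (Icc_subset_Icc_right hy.2)
    have := aux_rect (z := z) (zx := fun p => pdx u p - pdx u0 p)
      (zxy := fun p => pdxy u p - pdxy u0 p)
      (show ((s : ℝ) - 1) * h₁ ≤ (s : ℝ) * h₁ by nlinarith) hy.1
      ((hzc.mono (hcl s j a b c d)).mono hsub')
      (fun p hp => hdx s j a b c d p (hsub hp)) (fun p hp => hdxy s j a b c d p (hsub hp))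
      S hS0 0 (fun _ => 0) (fun _ => le_rfl) (fun p hp => by
        simp only [Finset.range_zero, Finset.sum_empty, add_zero]
        refine (hzxy s j a b c d p (hsub hp)).trans ?_
        have g1 := hZle s j a b c d p (hoc s j (hsub hp))
        have g2 := hZle s j a b c d _ (hnode s j)
        have g3 := mul_le_mul_of_nonneg_left g1 (hNc0 s j)
        have g4 := mul_le_mul_of_nonneg_left g2 (add_nonneg (hNc0 s j) (hLc0 s j))
        rw [hSd]
        linarith)
    refine this.trans ?_
    simp only [Finset.range_zero, Finset.sum_empty, add_zero]
    have e1 : (s : ℝ) * h₁ - ((s : ℝ) - 1) * h₁ = h₁ := by ring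
    rw [e1]
    have e2 : y - ((j : ℝ) - 1) * h₂ ≤ h₂ := by linarith [hy.2]
    calc S * (h₁ * (y - ((j : ℝ) - 1) * h₂)) ≤ S * (h₁ * h₂) := by gcongr
      _ = _ := by ring
  -- telescoping along the row
  have hB : ∀ j : ℕ, 1 ≤ j → j ≤ N₂ → ∀ y ∈ Icc (((j : ℝ) - 1) * h₂) ((j : ℝ) * h₂),
      ∀ k : ℕ, k ≤ N₁ → |z ((k : ℝ) * h₁, y) - z ((k : ℝ) * h₁, ((j : ℝ) - 1) * h₂)| ≤
        h₁ * h₂ * ∑ s ∈ Finset.Icc 1 k,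
          ((2 * Nc s j + Lc s j) * Z s j + H * (Nc s j + Lc s j) * A) := by
    intro j c d y hy k
    have hb := hyj j c d
    induction k with
    | zero =>
      intro _
      have e1 := hz2 y ⟨hb.1.trans hy.1, hy.2.trans hb.2⟩
      have e2 := hz2 (((j : ℝ) - 1) * h₂) ⟨hb.1, (hy.1.trans hy.2).trans hb.2⟩
      simp [e1, e2]
    | succ k ih =>
      intro hk
      have i1 := ih (by omega)
      have i2 := hS (k + 1) j (by omega) hk c d y hy
      rw [Finset.sum_Icc_succ_top (by omega), mul_add]
      push_cast at i2 ⊢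
      rw [add_sub_cancel_right] at i2
      rw [abs_le] at *
      constructor <;> linarith [i1.1, i1.2, i2.1, i2.2]
  -- conclusion
  intro i hi j hj
  rw [Finset.mem_Icc] at hi hj
  obtain ⟨hi1, hi2⟩ := hi
  obtain ⟨hj1, hj2⟩ := hj
  obtain ⟨k, rfl⟩ : ∃ k, i = k + 1 := ⟨i - 1, by omega⟩
  obtain ⟨l, rfl⟩ : ∃ l, j = l + 1 := ⟨j - 1, by omega⟩
  simp only [Nat.add_sub_cancel]
  set T := ∑ s ∈ Finset.Icc 1 k,
    ((2 * Nc s (l + 1) + Lc s (l + 1)) * Z s (l + 1) +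
      H * (Nc s (l + 1) + Lc s (l + 1)) * A) with hT
  have hT0 : 0 ≤ T := Finset.sum_nonneg fun s _ => by
    have := hNc0 s (l + 1); have := hLc0 s (l + 1); have := hZ0 s (l + 1)
    positivity
  have hxk := hxi (k + 1) hi1 hi2
  have hyl := hyj (l + 1) hj1 hj2
  have hck : ((k + 1 : ℕ) : ℝ) - 1 = k := by push_cast; ring
  have hcl' : ((l + 1 : ℕ) : ℝ) - 1 = l := by push_cast; ring
  have hck1 : ((k : ℝ)) * h₁ ≤ ((k + 1 : ℕ) : ℝ) * h₁ := by push_cast; nlinarith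
  have hcl1 : ((l : ℝ)) * h₂ ≤ ((l + 1 : ℕ) : ℝ) * h₂ := by push_cast; nlinarith
  rw [hck] at hxk
  rw [hcl'] at hyl
  have hnodez : |z (meshNode X Y N₁ N₂ (k + 1) (l + 1))| ≤ Z k (l + 1) := by
    have e : meshNode X Y N₁ N₂ (k + 1) (l + 1) = ((k : ℝ) * h₁, (l : ℝ) * h₂) := by
      unfold meshNode; rw [hck, hcl']
    rw [e]
    rcases Nat.eq_zero_or_pos k with rfl | hk
    · have := hz2 ((l : ℝ) * h₂) ⟨hyl.1, hcl1.trans hyl.2⟩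
      simp only [Nat.cast_zero, zero_mul, this, abs_zero]
      exact hZ0 _ _
    · refine hZle k (l + 1) hk (by omega) hj1 hj2 _ ⟨right_mem_Icc.2 ?_, ?_⟩
      · change ((k : ℝ) - 1) * h₁ ≤ (k : ℝ) * h₁
        nlinarith
      · rw [hcl']; exact left_mem_Icc.2 hcl1
  have hbot : ∀ x ∈ Icc ((k : ℝ) * h₁) (((k + 1 : ℕ) : ℝ) * h₁),
      |z (x, (l : ℝ) * h₂)| ≤ Z (k + 1) l := by
    intro x hx
    rcases Nat.eq_zero_or_pos l with rfl | hl
    · have := hz1 x ⟨hxk.1.trans hx.1, hx.2.trans hxk.2⟩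
      simp only [Nat.cast_zero, zero_mul, this, abs_zero]
      exact hZ0 _ _
    · refine hZle (k + 1) l hi1 hi2 hl (by omega) _ ⟨?_, right_mem_Icc.2 ?_⟩
      · rw [hck]; exact hx
      · change ((l : ℝ) - 1) * h₂ ≤ (l : ℝ) * h₂
        nlinarith
  set G := (Nc (k + 1) (l + 1) + Lc (k + 1) (l + 1)) * (Z k (l + 1) + H * A) with hGd
  have hn0 := hNc0 (k + 1) (l + 1)
  have hl0 := hLc0 (k + 1) (l + 1)
  have hzk0 := hZ0 k (l + 1)
  have hzl0 := hZ0 (k + 1) l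
  have hG0 : 0 ≤ G := by positivity
  have hcellO : Ioo ((k : ℝ) * h₁) (((k + 1 : ℕ) : ℝ) * h₁) ×ˢ
      Ioo ((l : ℝ) * h₂) (((l + 1 : ℕ) : ℝ) * h₂) = cellOp X Y N₁ N₂ (k + 1) (l + 1) := by
    unfold cellOp; rw [hck, hcl']
  have hcellC : Icc ((k : ℝ) * h₁) (((k + 1 : ℕ) : ℝ) * h₁) ×ˢ
      Icc ((l : ℝ) * h₂) (((l + 1 : ℕ) : ℝ) * h₂) = cellCl X Y N₁ N₂ (k + 1) (l + 1) := by
    unfold cellCl; rw [hck, hcl']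
  have gr := aux_gronwall (z := z) (zx := fun p => pdx u p - pdx u0 p)
    (zxy := fun p => pdxy u p - pdxy u0 p) hck1 hcl1
    (by rw [hcellC]; exact hzc.mono (hcl _ _ hi1 hi2 hj1 hj2))
    (by rw [hcellO]; exact hdx _ _ hi1 hi2 hj1 hj2)
    (by rw [hcellO]; exact hdxy _ _ hi1 hi2 hj1 hj2)
    G (Nc (k + 1) (l + 1)) (Z (k + 1) l + h₁ * h₂ * T) hG0 hn0 (by positivity)
    (by
      rw [hcellO]
      intro p hp
      refine (hzxy _ _ hi1 hi2 hj1 hj2 p hp).trans ?_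
      rw [hGd]
      gcongr)
    (by
      rintro ⟨x, y⟩ ⟨hx, hy⟩
      have i1 := hbot x hx
      have i2 := hB (l + 1) hj1 hj2 y (by rw [hcl']; exact hy) k (by omega)
      rw [hcl'] at i2
      rw [← hT] at i2
      simp only
      rw [abs_le] at *
      constructor <;> linarith [i1.1, i1.2, i2.1, i2.2])
  have e1 : ((k + 1 : ℕ) : ℝ) * h₁ - (k : ℝ) * h₁ = h₁ := by push_cast; ring
  have e2 : ((l + 1 : ℕ) : ℝ) * h₂ - (l : ℝ) * h₂ = h₂ := by push_cast; ring
  rw [e1, e2, hcellC, ← mul_assoc (Nc (k + 1) (l + 1))] at gr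
  have hRd : coefR X Y N₁ N₂ N u0 (k + 1) (l + 1) =
    hyp0F1 1 (Nc (k + 1) (l + 1) * h₁ * h₂) := rfl
  have hR'd : coefR' X Y N₁ N₂ N u0 (k + 1) (l + 1) =
    hyp0F1 2 (Nc (k + 1) (l + 1) * h₁ * h₂) * Nc (k + 1) (l + 1) := rfl
  have hw0 : 0 ≤ Nc (k + 1) (l + 1) * h₁ * h₂ := by positivity
  have hR0 := aux_hyp_nonneg _ hw0
  have hRle := aux_hyp_le _ hw0
  rw [← hRd] at gr hR0 hRle
  rw [hR'd]
  set R := coefR X Y N₁ N₂ N u0 (k + 1) (l + 1)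
  set F2 := hyp0F1 2 (Nc (k + 1) (l + 1) * h₁ * h₂)
  have hc0' : 0 ≤ Z (k + 1) l + h₁ * h₂ * T + h₁ * h₂ * G := by positivity
  have hfin : Z (k + 1) (l + 1) ≤ (Z (k + 1) l + h₁ * h₂ * T + h₁ * h₂ * G) * R := by
    rw [hZ]; unfold znorm
    rw [if_neg (by omega)]
    exact aux_bisup_le (g := fun p => |z p|) (mul_nonneg hc0' hR0) gr
  refine hfin.trans ?_
  have hlast := mul_le_mul_of_nonneg_left hRle hzl0
  rw [hGd]
  linarith
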